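/- Let q(t,r) = ∫_{-∞}^{r−t} ⟨s⟩^{-3/2} ds and δ_0 > 0. For any smooth function u on (0,∞)×R² (with r = |x| > 0), the following pointwise identity holds: ⟨t⟩^{-δ_0} e^{q} ∂_t u (−□u + u) = (1/2)∂_t( ⟨t⟩^{-δ_0} e^{q}( Σ_α (∂_α u)² + u² ) ) − ∂^i( ⟨t⟩^{-δ_0} e^{q} ∂_t u ∂_i u ) + (1/2) (⟨t⟩^{-δ_0} e^{q}/⟨t−r⟩^{3/2}) ( (G_1 u)² + (G_2 u)² + u² ) + (δ_0/2) t ⟨t⟩^{-(δ_0+2)} e^{q} ( Σ_α (∂_α u)² + u² ), where G_i = (x_i/r)∂_t + ∂_i and the sums over α run over {0,1,2}. -/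

import Mathlib

noncomputable def pt (m : ℝ → ℝ → ℝ → ℝ) (t x y : ℝ) : ℝ := deriv (fun s => m s x y) t
noncomputable def px (m : ℝ → ℝ → ℝ → ℝ) (t x y : ℝ) : ℝ := deriv (fun s => m t s y) x
noncomputable def py (m : ℝ → ℝ → ℝ → ℝ) (t x y : ℝ) : ℝ := deriv (fun s => m t x s) y

def IsSmoothFn (m : ℝ → ℝ → ℝ → ℝ) : Prop :=
  ContDiff ℝ (⊤ : ℕ∞) (fun p : ℝ × ℝ × ℝ => m p.1 p.2.1 p.2.2)

noncomputable def pd (α : Fin 3) : (ℝ → ℝ → ℝ → ℝ) → ℝ → ℝ → ℝ → ℝ := ![pt, px, py] α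

noncomputable def Om (m : ℝ → ℝ → ℝ → ℝ) : ℝ → ℝ → ℝ → ℝ :=
  fun t x y => x * py m t x y - y * px m t x y

noncomputable def Sc (m : ℝ → ℝ → ℝ → ℝ) : ℝ → ℝ → ℝ → ℝ :=
  fun t x y => t * pt m t x y + x * px m t x y + y * py m t x y

noncomputable def H1 (m : ℝ → ℝ → ℝ → ℝ) : ℝ → ℝ → ℝ → ℝ :=
  fun t x y => t * px m t x y + x * pt m t x y

noncomputable def H2 (m : ℝ → ℝ → ℝ → ℝ) : ℝ → ℝ → ℝ → ℝ :=
  fun t x y => t * py m t x y + y * pt m t x y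

noncomputable def rr (x y : ℝ) : ℝ := Real.sqrt (x ^ 2 + y ^ 2)

noncomputable def Box (m : ℝ → ℝ → ℝ → ℝ) : ℝ → ℝ → ℝ → ℝ :=
  fun t x y => -(pt (pt m) t x y) + px (px m) t x y + py (py m) t x y

noncomputable def G1 (m : ℝ → ℝ → ℝ → ℝ) : ℝ → ℝ → ℝ → ℝ :=
  fun t x y => (x / rr x y) * pt m t x y + px m t x y

noncomputable def G2 (m : ℝ → ℝ → ℝ → ℝ) : ℝ → ℝ → ℝ → ℝ :=
  fun t x y => (y / rr x y) * pt m t x y + py m t x y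

/-- The ghost weight q(t,r) = ∫_{-∞}^{r−t} ⟨s⟩^{-3/2} ds. -/
noncomputable def ghq (t r : ℝ) : ℝ :=
  ∫ s in Set.Iic (r - t), (Real.sqrt (1 + s ^ 2)) ^ (-(3 : ℝ) / 2)

/-- The energy density Σ_α (∂_α u)² + u². -/
noncomputable def en (u : ℝ → ℝ → ℝ → ℝ) (t x y : ℝ) : ℝ :=
  (pt u t x y) ^ 2 + (px u t x y) ^ 2 + (py u t x y) ^ 2 + (u t x y) ^ 2

theorem gw_int : MeasureTheory.Integrable
    (fun s : ℝ => (Real.sqrt (1 + s ^ 2)) ^ (-(3 : ℝ) / 2)) := by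
  have h := integrable_rpow_neg_one_add_norm_sq (E := ℝ) (μ := MeasureTheory.volume) (r := 3 / 2)
    (by norm_num)
  refine h.congr (Filter.Eventually.of_forall fun s => ?_)
  have h0 : (0 : ℝ) ≤ 1 + s ^ 2 := by positivity
  simp only [Real.norm_eq_abs, sq_abs]
  rw [Real.sqrt_eq_rpow, ← Real.rpow_mul h0]
  norm_num

theorem gw_Iic (z : ℝ) : HasDerivAt
    (fun z => ∫ s in Set.Iic z, (Real.sqrt (1 + s ^ 2)) ^ (-(3 : ℝ) / 2))
    ((Real.sqrt (1 + z ^ 2)) ^ (-(3 : ℝ) / 2)) z := by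
  have hc : Continuous (fun s : ℝ => (Real.sqrt (1 + s ^ 2)) ^ (-(3 : ℝ) / 2)) := by
    refine Continuous.rpow_const (by fun_prop) fun s => Or.inl ?_
    positivity
  have h := (hc.integral_hasStrictDerivAt 0 z).hasDerivAt
  have h2 := h.const_add (∫ s in Set.Iic (0 : ℝ), (Real.sqrt (1 + s ^ 2)) ^ (-(3 : ℝ) / 2))
  refine h2.congr_of_eventuallyEq (Filter.Eventually.of_forall fun w => ?_)
  have := intervalIntegral.integral_Iic_sub_Iic (a := 0) (b := w)
    gw_int.integrableOn gw_int.integrableOn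
  simp only
  rw [← this]
  ring

theorem gw_ghq {f g : ℝ → ℝ} {f' g' s : ℝ} (hf : HasDerivAt f f' s) (hg : HasDerivAt g g' s) :
    HasDerivAt (fun s => ghq (f s) (g s))
      ((Real.sqrt (1 + (f s - g s) ^ 2)) ^ (-(3 : ℝ) / 2) * (g' - f')) s := by
  have h := (gw_Iic (g s - f s)).comp s (hg.sub hf)
  rw [show (f s - g s) ^ 2 = (g s - f s) ^ 2 by ring]
  exact h

theorem gw_w (δ t : ℝ) : HasDerivAt (fun t : ℝ => (Real.sqrt (1 + t ^ 2)) ^ (-δ))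
    (-δ * t * (Real.sqrt (1 + t ^ 2)) ^ (-(δ + 2))) t := by
  have h0 : (0 : ℝ) < 1 + t ^ 2 := by positivity
  have hs : 0 < Real.sqrt (1 + t ^ 2) := Real.sqrt_pos.2 h0
  have h1 : HasDerivAt (fun t : ℝ => 1 + t ^ 2) (2 * t) t := by
    simpa using (hasDerivAt_pow 2 t).const_add 1
  have h := (h1.sqrt h0.ne').rpow_const (p := -δ) (Or.inl hs.ne')
  convert h using 1
  rw [show -(δ + 2) = (-δ - 1) - 1 by ring, Real.rpow_sub_one hs.ne' (-δ - 1)]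
  field_simp

theorem gw_rx (x y : ℝ) (h : 0 < rr x y) :
    HasDerivAt (fun s => rr s y) (x / rr x y) x := by
  have h0 : 0 < x ^ 2 + y ^ 2 := Real.sqrt_pos.1 h
  have h1 : HasDerivAt (fun s : ℝ => s ^ 2 + y ^ 2) (2 * x) x := by
    simpa using (hasDerivAt_pow 2 x).add_const (y ^ 2)
  have h2 := h1.sqrt h0.ne'
  rw [mul_div_mul_left _ _ (two_ne_zero)] at h2
  exact h2

theorem gw_ry (x y : ℝ) (h : 0 < rr x y) :
    HasDerivAt (fun s => rr x s) (y / rr x y) y := by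
  have e : ∀ a b, rr a b = rr b a := fun a b => by simp only [rr, add_comm]
  have h' : 0 < rr y x := by rwa [e]
  have := gw_rx y x h'
  simpa only [e _ x] using this

section
variable {u : ℝ → ℝ → ℝ → ℝ}

theorem gw_ht (hu : IsSmoothFn u) (t x y : ℝ) : HasDerivAt (fun s => u s x y)
    (fderiv ℝ (fun p : ℝ × ℝ × ℝ => u p.1 p.2.1 p.2.2) (t, x, y) (1, 0, 0)) t := by
  have h := (hu.differentiable (by simp) (t, x, y)).hasFDerivAt
  have hl : HasDerivAt (fun s : ℝ => ((s, x, y) : ℝ × ℝ × ℝ)) (1, 0, 0) t :=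
    (hasDerivAt_id t).prodMk ((hasDerivAt_const t x).prodMk (hasDerivAt_const t y))
  exact h.comp_hasDerivAt t hl

theorem gw_hx (hu : IsSmoothFn u) (t x y : ℝ) : HasDerivAt (fun s => u t s y)
    (fderiv ℝ (fun p : ℝ × ℝ × ℝ => u p.1 p.2.1 p.2.2) (t, x, y) (0, 1, 0)) x := by
  have h := (hu.differentiable (by simp) (t, x, y)).hasFDerivAt
  have hl : HasDerivAt (fun s : ℝ => ((t, s, y) : ℝ × ℝ × ℝ)) (0, 1, 0) x :=
    (hasDerivAt_const x t).prodMk ((hasDerivAt_id x).prodMk (hasDerivAt_const x y))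
  exact h.comp_hasDerivAt x hl

theorem gw_hy (hu : IsSmoothFn u) (t x y : ℝ) : HasDerivAt (fun s => u t x s)
    (fderiv ℝ (fun p : ℝ × ℝ × ℝ => u p.1 p.2.1 p.2.2) (t, x, y) (0, 0, 1)) y := by
  have h := (hu.differentiable (by simp) (t, x, y)).hasFDerivAt
  have hl : HasDerivAt (fun s : ℝ => ((t, x, s) : ℝ × ℝ × ℝ)) (0, 0, 1) y :=
    (hasDerivAt_const y t).prodMk ((hasDerivAt_const y x).prodMk (hasDerivAt_id y))
  exact h.comp_hasDerivAt y hl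

theorem gw_t (hu : IsSmoothFn u) (t x y : ℝ) : HasDerivAt (fun s => u s x y) (pt u t x y) t :=
  (gw_ht hu t x y).differentiableAt.hasDerivAt

theorem gw_x (hu : IsSmoothFn u) (t x y : ℝ) : HasDerivAt (fun s => u t s y) (px u t x y) x :=
  (gw_hx hu t x y).differentiableAt.hasDerivAt

theorem gw_y (hu : IsSmoothFn u) (t x y : ℝ) : HasDerivAt (fun s => u t x s) (py u t x y) y :=
  (gw_hy hu t x y).differentiableAt.hasDerivAt

theorem gw_sm (hu : IsSmoothFn u) (v : ℝ × ℝ × ℝ) : ContDiff ℝ (⊤ : ℕ∞)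
    (fun p => fderiv ℝ (fun p : ℝ × ℝ × ℝ => u p.1 p.2.1 p.2.2) p v) :=
  (hu.fderiv_right (m := (⊤ : ℕ∞)) (by simp)).clm_apply contDiff_const

theorem gw_pt (hu : IsSmoothFn u) : IsSmoothFn (pt u) := by
  have : (fun p : ℝ × ℝ × ℝ => pt u p.1 p.2.1 p.2.2) = _ :=
    funext fun p => (gw_ht hu p.1 p.2.1 p.2.2).deriv
  unfold IsSmoothFn
  rw [this]
  exact gw_sm hu _

theorem gw_px (hu : IsSmoothFn u) : IsSmoothFn (px u) := by
  have : (fun p : ℝ × ℝ × ℝ => px u p.1 p.2.1 p.2.2) = _ :=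
    funext fun p => (gw_hx hu p.1 p.2.1 p.2.2).deriv
  unfold IsSmoothFn
  rw [this]
  exact gw_sm hu _

theorem gw_py (hu : IsSmoothFn u) : IsSmoothFn (py u) := by
  have : (fun p : ℝ × ℝ × ℝ => py u p.1 p.2.1 p.2.2) = _ :=
    funext fun p => (gw_hy hu p.1 p.2.1 p.2.2).deriv
  unfold IsSmoothFn
  rw [this]
  exact gw_sm hu _

theorem gw_symm (hu : IsSmoothFn u) (p v w : ℝ × ℝ × ℝ) :
    fderiv ℝ (fun q => fderiv ℝ (fun p : ℝ × ℝ × ℝ => u p.1 p.2.1 p.2.2) q v) p w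
    = fderiv ℝ (fun q => fderiv ℝ (fun p : ℝ × ℝ × ℝ => u p.1 p.2.1 p.2.2) q w) p v := by
  have hd : DifferentiableAt ℝ (fderiv ℝ (fun p : ℝ × ℝ × ℝ => u p.1 p.2.1 p.2.2)) p :=
    (hu.fderiv_right (m := (⊤ : ℕ∞)) (by simp)).differentiable (by simp) p
  have hs : IsSymmSndFDerivAt ℝ (fun p : ℝ × ℝ × ℝ => u p.1 p.2.1 p.2.2) p :=
    hu.contDiffAt.isSymmSndFDerivAt (by
      simp only [minSmoothness_of_isRCLikeNormedField]
      exact WithTop.coe_le_coe.2 (le_top (a := (2 : ℕ∞))))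
  rw [fderiv_clm_apply hd (by fun_prop), fderiv_clm_apply hd (by fun_prop)]
  simpa using hs.eq w v

theorem gw_tx (hu : IsSmoothFn u) (t x y : ℝ) : pt (px u) t x y = px (pt u) t x y := by
  have h1 := (gw_ht (gw_px hu) t x y).deriv
  have h2 := (gw_hx (gw_pt hu) t x y).deriv
  have e1 : (fun p : ℝ × ℝ × ℝ => px u p.1 p.2.1 p.2.2) = _ :=
    funext fun p => (gw_hx hu p.1 p.2.1 p.2.2).deriv
  have e2 : (fun p : ℝ × ℝ × ℝ => pt u p.1 p.2.1 p.2.2) = _ :=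
    funext fun p => (gw_ht hu p.1 p.2.1 p.2.2).deriv
  rw [e1] at h1
  rw [e2] at h2
  exact h1.trans ((gw_symm hu _ _ _).trans h2.symm)

theorem gw_ty (hu : IsSmoothFn u) (t x y : ℝ) : pt (py u) t x y = py (pt u) t x y := by
  have h1 := (gw_ht (gw_py hu) t x y).deriv
  have h2 := (gw_hy (gw_pt hu) t x y).deriv
  have e1 : (fun p : ℝ × ℝ × ℝ => py u p.1 p.2.1 p.2.2) = _ :=
    funext fun p => (gw_hy hu p.1 p.2.1 p.2.2).deriv
  have e2 : (fun p : ℝ × ℝ × ℝ => pt u p.1 p.2.1 p.2.2) = _ :=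
    funext fun p => (gw_ht hu p.1 p.2.1 p.2.2).deriv
  rw [e1] at h1
  rw [e2] at h2
  exact h1.trans ((gw_symm hu _ _ _).trans h2.symm)

end

theorem ghost_weight_identity (δ0 : ℝ) (hδ0 : 0 < δ0)
    (u : ℝ → ℝ → ℝ → ℝ) (hu : IsSmoothFn u) :
    ∀ t x y : ℝ, 0 < t → 0 < rr x y →
      (Real.sqrt (1 + t ^ 2)) ^ (-δ0) * Real.exp (ghq t (rr x y)) * pt u t x y
          * (-(Box u t x y) + u t x y)
        = (1 / 2) * pt (fun t x y =>
              (Real.sqrt (1 + t ^ 2)) ^ (-δ0) * Real.exp (ghq t (rr x y))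
                * en u t x y) t x y
          - (px (fun t x y =>
                (Real.sqrt (1 + t ^ 2)) ^ (-δ0) * Real.exp (ghq t (rr x y))
                  * pt u t x y * px u t x y) t x y
             + py (fun t x y =>
                (Real.sqrt (1 + t ^ 2)) ^ (-δ0) * Real.exp (ghq t (rr x y))
                  * pt u t x y * py u t x y) t x y)
          + (1 / 2) * ((Real.sqrt (1 + t ^ 2)) ^ (-δ0) * Real.exp (ghq t (rr x y))
              / (Real.sqrt (1 + (t - rr x y) ^ 2)) ^ ((3 : ℝ) / 2))
              * ((G1 u t x y) ^ 2 + (G2 u t x y) ^ 2 + (u t x y) ^ 2)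
          + (δ0 / 2) * t * (Real.sqrt (1 + t ^ 2)) ^ (-(δ0 + 2))
              * Real.exp (ghq t (rr x y)) * en u t x y := by
  intro t x y ht hr
  have hrt := gw_ghq (hasDerivAt_id t) (hasDerivAt_const t (rr x y))
  have hrx := gw_ghq (hasDerivAt_const x t) (gw_rx x y hr)
  have hry := gw_ghq (hasDerivAt_const y t) (gw_ry x y hr)
  have A := (((gw_w δ0 t).mul hrt.exp).mul
    (((((gw_t (gw_pt hu) t x y).pow 2).add ((gw_t (gw_px hu) t x y).pow 2)).add
      ((gw_t (gw_py hu) t x y).pow 2)).add ((gw_t hu t x y).pow 2))).deriv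
  have B := (((hrx.exp.const_mul ((Real.sqrt (1 + t ^ 2)) ^ (-δ0))).mul
    (gw_x (gw_pt hu) t x y)).mul (gw_x (gw_px hu) t x y)).deriv
  have C := (((hry.exp.const_mul ((Real.sqrt (1 + t ^ 2)) ^ (-δ0))).mul
    (gw_y (gw_pt hu) t x y)).mul (gw_y (gw_py hu) t x y)).deriv
  have A' := (show pt (fun t x y => (Real.sqrt (1 + t ^ 2)) ^ (-δ0) * Real.exp (ghq t (rr x y))
      * en u t x y) t x y = _ from A)
  have B' := (show px (fun t x y => (Real.sqrt (1 + t ^ 2)) ^ (-δ0) * Real.exp (ghq t (rr x y))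
      * pt u t x y * px u t x y) t x y = _ from B)
  have C' := (show py (fun t x y => (Real.sqrt (1 + t ^ 2)) ^ (-δ0) * Real.exp (ghq t (rr x y))
      * pt u t x y * py u t x y) t x y = _ from C)
  rw [A', B', C']
  clear A B C A' B' C' hrt hrx hry
  have hn : (Real.sqrt (1 + (t - rr x y) ^ 2)) ^ (-(3 : ℝ) / 2)
      = ((Real.sqrt (1 + (t - rr x y) ^ 2)) ^ ((3 : ℝ) / 2))⁻¹ := by
    rw [← Real.rpow_neg (Real.sqrt_nonneg _)]
    norm_num
  have h1 : (x / rr x y) ^ 2 + (y / rr x y) ^ 2 = 1 := by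
    have : rr x y ^ 2 = x ^ 2 + y ^ 2 := Real.sq_sqrt (by positivity)
    rw [div_pow, div_pow, ← add_div, ← this]
    exact div_self (by positivity)
  simp only [id, Pi.mul_apply, Pi.add_apply, Pi.pow_apply, hn, gw_tx hu, gw_ty hu, Box, G1, G2, en,
    div_eq_mul_inv _ ((Real.sqrt (1 + (t - rr x y) ^ 2)) ^ ((3 : ℝ) / 2))]
  generalize ((Real.sqrt (1 + (t - rr x y) ^ 2)) ^ ((3 : ℝ) / 2))⁻¹ = a
  generalize x / rr x y = c at *
  generalize y / rr x y = d at *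
  generalize Real.exp (ghq t (rr x y)) = e
  generalize (Real.sqrt (1 + t ^ 2)) ^ (-δ0) = w
  generalize (Real.sqrt (1 + t ^ 2)) ^ (-(δ0 + 2)) = w2
  push_cast
  linear_combination (-(1 / 2) * w * e * a * (pt u t x y) ^ 2) * h1
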